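/- Let H be a Hilbert space, A ⊆ B(H) a simple unital C*-algebra, and G a selfadjoint unitary on H with G A G = A and G ∉ A, so that C*(A, G) ≅ A ⋊_{Ad_G} ℤ₂. Let U(t) = e^{itH₀} be a strongly continuous unitary one-parameter group on H commuting with G such that α_t := Ad_{U(t)}|_A defines a dynamics on A. If Tr_H(e^{−βH₀}) < ∞ and Tr_H(e^{−βH₀} G) ≠ 0 for some β, then the (α, β)-KMS state ω_β(a) := Tr_H(e^{−βH₀} a) / Tr_H(e^{−βH₀}) on A does not have a unique extension to a KMS state on the crossed product 𝐀 = A ⋊_{Ad_G} ℤ₂: the canonical extension ω_β ∘ E and the restriction of the Gibbs state g_β(x) = Tr_H(e^{−βH₀} x)/Tr_H(e^{−βH₀}) to 𝐀 are two distinct (𝛂, β)-KMS extensions. -/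

import Mathlib

open scoped InnerProductSpace ComplexOrder

noncomputable section

/-- A strongly continuous one-parameter group of *-automorphisms of a unital C*-algebra. -/
structure Dynamics (A : Type*) [CStarAlgebra A] where
  α : ℝ → A ≃⋆ₐ[ℂ] A
  α_zero : ∀ a, α 0 a = a
  α_add : ∀ s t a, α (s + t) a = α s (α t a)
  α_cont : ∀ a, Continuous fun t => α t a

variable {A : Type*} [CStarAlgebra A]

/-- `f` is the entire analytic extension of `t ↦ α_t a`; an element admitting such an
extension is an entire analytic element for the dynamics. -/
def Dynamics.IsAnalyticExt (d : Dynamics A) (a : A) (f : ℂ → A) : Prop :=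
  Differentiable ℂ f ∧ ∀ t : ℝ, f (t : ℂ) = d.α t a

/-- A state: positive normalized linear functional. -/
def IsState (ω : A → ℂ) : Prop :=
  IsLinearMap ℂ ω ∧ (∀ a : A, 0 ≤ ω (star a * a)) ∧ ω 1 = 1

/-- The `(α, β)`-KMS condition: `ω (a * α_{iβ}(b)) = ω (b * a)` for entire analytic `a, b`. -/
def Dynamics.IsKMS (d : Dynamics A) (β : ℝ) (ω : A → ℂ) : Prop :=
  IsState ω ∧ ∀ a b : A, ∀ fa fb : ℂ → A, d.IsAnalyticExt a fa → d.IsAnalyticExt b fb →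
    ω (a * fb (Complex.I * β)) = ω (b * a)

/-- A graded C*-dynamical system: dynamics plus a commuting involutive grading. -/
structure GradedDyn (A : Type*) [CStarAlgebra A] extends Dynamics A where
  γ : A ≃⋆ₐ[ℂ] A
  γ_invol : ∀ a, γ (γ a) = a
  γ_comm : ∀ t a, γ (α t a) = α t (γ a)

/-- The `γ`-twisted `(α, β)`-KMS condition: `ρ (a * α_{iβ}(b)) = ρ (b * γ a)`. -/
def Dynamics.IsTwistedKMS (d : Dynamics A) (γ : A ≃⋆ₐ[ℂ] A) (β : ℝ) (ρ : A → ℂ) : Prop :=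
  IsLinearMap ℂ ρ ∧ ∀ a b : A, ∀ fa fb : ℂ → A, d.IsAnalyticExt a fa → d.IsAnalyticExt b fb →
    ρ (a * fb (Complex.I * β)) = ρ (b * γ a)

/-- Hermitian functional: `ρ(a*) = conj (ρ a)`. -/
def IsHermitian (ρ : A → ℂ) : Prop := ∀ a, ρ (star a) = starRingEnd ℂ (ρ a)

/-- `ρ` is dominated by `ω`: `|ρ(a* b)|² ≤ ω(a* a) ω(b* b)`. -/
def Dominated (ω ρ : A → ℂ) : Prop :=
  ∀ a b : A, (‖ρ (star a * b)‖ : ℂ) ^ 2 ≤ ω (star a * a) * ω (star b * b)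

/-- The set `F_β(A, α, γ, ω)`: hermitian `γ`-twisted `(α,β)`-KMS functionals dominated by `ω`. -/
def TwistedKMSDom (d : Dynamics A) (γ : A ≃⋆ₐ[ℂ] A) (β : ℝ) (ω ρ : A → ℂ) : Prop :=
  d.IsTwistedKMS γ β ρ ∧ IsHermitian ρ ∧ Dominated ω ρ

/-- Product of the `ℤ₂`-crossed product `A ⋊_γ ℤ₂` realized on `A ⊕ A`. -/
def cpMul (γ : A ≃⋆ₐ[ℂ] A) (p q : A × A) : A × A :=
  (p.1 * q.1 + p.2 * γ q.2, p.1 * q.2 + p.2 * γ q.1)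

/-- Involution of the crossed product. -/
def cpStar (γ : A ≃⋆ₐ[ℂ] A) (p : A × A) : A × A := (star p.1, γ (star p.2))

/-- Unit of the crossed product. -/
def cpOne : A × A := (1, 0)

/-- A state on the crossed product. -/
def cpIsState (γ : A ≃⋆ₐ[ℂ] A) (W : A × A → ℂ) : Prop :=
  IsLinearMap ℂ W ∧ (∀ p : A × A, 0 ≤ W (cpMul γ (cpStar γ p) p)) ∧ W (cpOne : A × A) = 1

/-- Entire analytic extension for the componentwise extended dynamics `𝛂` on `A ⊕ A`. -/
def cpIsAnalyticExt (d : Dynamics A) (p : A × A) (f : ℂ → A × A) : Prop :=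
  Differentiable ℂ f ∧ ∀ t : ℝ, f (t : ℂ) = (d.α t p.1, d.α t p.2)

/-- `(𝛂, β)`-KMS states of the crossed product `A ⋊_γ ℤ₂`. -/
def cpIsKMS (d : Dynamics A) (γ : A ≃⋆ₐ[ℂ] A) (β : ℝ) (W : A × A → ℂ) : Prop :=
  cpIsState γ W ∧ ∀ p q : A × A, ∀ fp fq : ℂ → A × A,
    cpIsAnalyticExt d p fp → cpIsAnalyticExt d q fq →
    W (cpMul γ p (fq (Complex.I * β))) = W (cpMul γ q p)


/-- The Gibbs functional `x ↦ Tr(e^{−βH₀} x) / Tr(e^{−βH₀})` on `B(H)`, expressed through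
an orthonormal eigenbasis `e` of the Hamiltonian with eigenvalues `lam`. -/
def gibbsFn {Hs : Type*} [NormedAddCommGroup Hs] [InnerProductSpace ℂ Hs]
    {κ : Type*} (e : κ → Hs) (lam : κ → ℝ) (β : ℝ) (x : Hs →L[ℂ] Hs) : ℂ :=
  (∑' k, (Real.exp (-β * lam k) : ℂ) * ⟪e k, x (e k)⟫_ℂ) /
    (∑' k, ((Real.exp (-β * lam k) : ℝ) : ℂ))

/-!
Write `w k = exp (-β * lam k)` and let `x j k` be the matrix of `x` in the eigenbasis. An analytic
continuation of `t ↦ U t * y * U (-t)` has matrix `exp (i z (lam j - lam k)) * y j k` at every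
complex `z`, so at `z = i β` the weights satisfy `w k * exp (-β (lam j - lam k)) = w j`, which turns
`Tr (w x α_{iβ}(y))` into `Tr (w y x)` once the double sum is reordered. This KMS identity on `B(H)`
restricts to `A` and to `π(A) + π(A) G`, a representation of the crossed product. As `G` is fixed
by `Ad U`, it also makes the Gibbs state invariant under `Ad G`, and a `γ`-invariant KMS state
composed with `(a, b) ↦ a` is again KMS. The two extensions differ at `(0, 1)`, which represents
`G`.
-/

section MatrixCoefficients

open Submodule

variable {𝕜 E κ : Type*} [RCLike 𝕜] [NormedAddCommGroup E] [InnerProductSpace 𝕜 E]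
  {e : κ → E} {w : κ → 𝕜}

theorem norm_inner_apply_self_le (he : Orthonormal 𝕜 e) (x : E →L[𝕜] E) (k : κ) :
    ‖⟪e k, x (e k)⟫_𝕜‖ ≤ ‖x‖ := by
  simpa [he.norm_eq_one k] using (norm_inner_le_norm (𝕜 := 𝕜) (e k) (x (e k))).trans
    (mul_le_mul_of_nonneg_left (x.le_opNorm (e k)) (norm_nonneg _))

theorem summable_mul_inner_apply_self (he : Orthonormal 𝕜 e) (hw : Summable w) (x : E →L[𝕜] E) :
    Summable fun k => w k * ⟪e k, x (e k)⟫_𝕜 := by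
  refine .of_norm_bounded (hw.norm.mul_right ‖x‖) fun k => ?_
  rw [norm_mul]
  gcongr
  exact norm_inner_apply_self_le he x k

theorem tsum_norm_inner_apply_sq_le (he : Orthonormal 𝕜 e) (x : E →L[𝕜] E) (j : κ) :
    ∑' k, ‖⟪e k, x (e j)⟫_𝕜‖ ^ 2 ≤ ‖x‖ ^ 2 :=
  calc ∑' k, ‖⟪e k, x (e j)⟫_𝕜‖ ^ 2 ≤ ‖x (e j)‖ ^ 2 := he.tsum_inner_products_le (x (e j))
    _ ≤ ‖x‖ ^ 2 := by
      gcongr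
      simpa [he.norm_eq_one j] using x.le_opNorm (e j)

theorem summable_norm_mul_norm_inner_apply_sq (he : Orthonormal 𝕜 e) (hw : Summable w)
    (x : E →L[𝕜] E) :
    Summable fun p : κ × κ => ‖w p.1‖ * ‖⟪e p.2, x (e p.1)⟫_𝕜‖ ^ 2 := by
  have nonneg : 0 ≤ fun p : κ × κ => ‖w p.1‖ * ‖⟪e p.2, x (e p.1)⟫_𝕜‖ ^ 2 :=
    fun p => mul_nonneg (norm_nonneg _) (sq_nonneg _)
  refine (summable_prod_of_nonneg nonneg).mpr
    ⟨fun j => (he.inner_products_summable (x (e j))).mul_left ‖w j‖, ?_⟩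
  refine .of_nonneg_of_le (fun j => tsum_nonneg fun k => by positivity) (fun j => ?_)
    (hw.norm.mul_right (‖x‖ ^ 2))
  simp only [tsum_mul_left]
  gcongr
  exact tsum_norm_inner_apply_sq_le he x j

variable [CompleteSpace E]

theorem norm_inner_star_apply (x : E →L[𝕜] E) (u v : E) :
    ‖⟪v, star x u⟫_𝕜‖ = ‖⟪u, x v⟫_𝕜‖ := by
  rw [ContinuousLinearMap.star_eq_adjoint, ContinuousLinearMap.adjoint_inner_right,
    norm_inner_symm]

theorem summable_mul_inner_mul_inner (he : Orthonormal 𝕜 e) (hw : Summable w) (x y : E →L[𝕜] E) :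
    Summable fun p : κ × κ => w p.1 * (⟪e p.1, y (e p.2)⟫_𝕜 * ⟪e p.2, x (e p.1)⟫_𝕜) := by
  refine .of_norm_bounded ((summable_norm_mul_norm_inner_apply_sq he hw (star y)).add
    (summable_norm_mul_norm_inner_apply_sq he hw x)) fun ⟨j, k⟩ => ?_
  simp only [norm_mul, norm_inner_star_apply, ← mul_add]
  gcongr
  nlinarith [two_mul_le_add_sq ‖⟪e j, y (e k)⟫_𝕜‖ ‖⟪e k, x (e j)⟫_𝕜‖,
    mul_nonneg (norm_nonneg ⟪e j, y (e k)⟫_𝕜) (norm_nonneg ⟪e k, x (e j)⟫_𝕜)]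

theorem inner_mul_apply_eq_tsum (he : Orthonormal 𝕜 e)
    (he_dense : Dense (span 𝕜 (Set.range e) : Set E)) (x y : E →L[𝕜] E) (u v : E) :
    ⟪u, (x * y) v⟫_𝕜 = ∑' j, ⟪u, x (e j)⟫_𝕜 * ⟪e j, y v⟫_𝕜 := by
  have hspan : ⊤ ≤ (span 𝕜 (Set.range e)).topologicalClosure :=
    (dense_iff_topologicalClosure_eq_top.mp he_dense).ge
  have parseval :=
    (HilbertBasis.mk he hspan).tsum_inner_mul_inner (ContinuousLinearMap.adjoint x u) (y v)
  simpa only [HilbertBasis.coe_mk, ContinuousLinearMap.adjoint_inner_left,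
    mul_apply_eq_comp] using parseval.symm

end MatrixCoefficients

theorem eq_of_differentiable_of_forall_ofReal_eq {E : Type*} [NormedAddCommGroup E]
    [NormedSpace ℂ E] [CompleteSpace E] {f g : ℂ → E} (hf : Differentiable ℂ f)
    (hg : Differentiable ℂ g) (hfg : ∀ t : ℝ, f t = g t) : f = g := by
  have ofReal_tendsto :
      Filter.Tendsto (fun t : ℝ => (t : ℂ)) (nhdsWithin 0 {0}ᶜ) (nhdsWithin 0 {0}ᶜ) := by
    simpa using Complex.continuous_ofReal.continuousWithinAt.tendsto_nhdsWithin
      (x := (0 : ℝ)) (s := {0}ᶜ) (t := {0}ᶜ) fun t ht => by simpa using ht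
  exact AnalyticOnNhd.eq_of_frequently_eq (hf.differentiableOn.analyticOnNhd isOpen_univ)
    (hg.differentiableOn.analyticOnNhd isOpen_univ)
    (ofReal_tendsto.frequently (.of_forall hfg))

theorem tsum_ofReal_exp_pos {κ : Type*} [Nonempty κ] {f : κ → ℝ}
    (hf : Summable fun k => Real.exp (f k)) : 0 < ∑' k, ((Real.exp (f k) : ℝ) : ℂ) := by
  rw [← Complex.ofReal_tsum, Complex.zero_lt_real]
  exact hf.tsum_pos (fun k => (Real.exp_pos _).le) (Classical.arbitrary κ) (Real.exp_pos _)

section Gibbs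

variable {Hs κ : Type*} [NormedAddCommGroup Hs] [InnerProductSpace ℂ Hs]
  {e : κ → Hs} {lam : κ → ℝ} {β : ℝ}

theorem isLinearMap_gibbsFn (he : Orthonormal ℂ e)
    (hs : Summable fun k => Real.exp (-β * lam k)) : IsLinearMap ℂ (gibbsFn e lam β) where
  map_add x y := by
    have summable := summable_mul_inner_apply_self he (Complex.summable_ofReal.mpr hs)
    simp only [gibbsFn, add_apply, inner_add_right, mul_add, ← add_div]
    rw [(summable x).tsum_add (summable y)]
  map_smul c x := by
    simp only [gibbsFn, smul_apply, inner_smul_right, mul_left_comm _ c,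
      tsum_mul_left, smul_eq_mul, mul_div_assoc]

theorem gibbsFn_one [Nonempty κ] (he : Orthonormal ℂ e)
    (hs : Summable fun k => Real.exp (-β * lam k)) : gibbsFn e lam β 1 = 1 := by
  rw [gibbsFn, div_eq_one_iff_eq (tsum_ofReal_exp_pos hs).ne']
  simp [inner_self_eq_norm_sq_to_K, he.norm_eq_one]

theorem inner_conj_apply_eigenvector {U : ℝ → Hs ≃ₗᵢ[ℂ] Hs}
    (he_eig : ∀ (t : ℝ) (k), U t (e k) = Complex.exp (Complex.I * t * lam k) • e k)
    (y : Hs →L[ℂ] Hs) (t : ℝ) (j k : κ) :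
    ⟪e j, U t (y (U (-t) (e k)))⟫_ℂ =
      Complex.exp (Complex.I * t * (lam j - lam k)) * ⟪e j, y (e k)⟫_ℂ := by
  have hej : Complex.exp (-(Complex.I * t * lam j)) • U t (e j) = e j := by
    rw [he_eig, smul_smul, ← Complex.exp_add, neg_add_cancel, Complex.exp_zero, one_smul]
  calc ⟪e j, U t (y (U (-t) (e k)))⟫_ℂ
      = ⟪Complex.exp (-(Complex.I * t * lam j)) • U t (e j), U t (y (U (-t) (e k)))⟫_ℂ := by
        rw [hej]
    _ = Complex.exp (Complex.I * t * lam j) *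
          (Complex.exp (-(Complex.I * t * lam k)) * ⟪e j, y (e k)⟫_ℂ) := by
        rw [← map_smul, LinearIsometryEquiv.inner_map_map, he_eig, map_smul, inner_smul_left,
          inner_smul_right, ← Complex.exp_conj]
        simp
    _ = Complex.exp (Complex.I * t * (lam j - lam k)) * ⟪e j, y (e k)⟫_ℂ := by
        rw [← mul_assoc, ← Complex.exp_add]
        ring_nf

variable [CompleteSpace Hs]

theorem gibbsFn_star_mul_self_nonneg (x : Hs →L[ℂ] Hs) : 0 ≤ gibbsFn e lam β (star x * x) := by
  have weight_nonneg (k : κ) : (0 : ℂ) ≤ (Real.exp (-β * lam k) : ℝ) :=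
    Complex.zero_le_real.mpr (Real.exp_pos _).le
  refine div_nonneg (tsum_nonneg fun k => mul_nonneg (weight_nonneg k) ?_)
    (tsum_nonneg weight_nonneg)
  rw [ContinuousLinearMap.star_eq_adjoint, mul_apply_eq_comp,
    ContinuousLinearMap.adjoint_inner_right]
  simp [inner_self_eq_norm_sq_to_K]

theorem isState_gibbsFn [Nonempty κ] (he : Orthonormal ℂ e)
    (hs : Summable fun k => Real.exp (-β * lam k)) : IsState (gibbsFn e lam β) :=
  ⟨isLinearMap_gibbsFn he hs, gibbsFn_star_mul_self_nonneg, gibbsFn_one he hs⟩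

theorem gibbsFn_mul_eq_of_inner_eq_exp_mul (he : Orthonormal ℂ e)
    (he_dense : Dense (Submodule.span ℂ (Set.range e) : Set Hs))
    (hs : Summable fun k => Real.exp (-β * lam k)) (x : Hs →L[ℂ] Hs) {y y' : Hs →L[ℂ] Hs}
    (hy : ∀ j k, ⟪e j, y' (e k)⟫_ℂ =
      (Real.exp (-β * (lam j - lam k)) : ℂ) * ⟪e j, y (e k)⟫_ℂ) :
    gibbsFn e lam β (x * y') = gibbsFn e lam β (y * x) := by
  have weight_shift (j k : κ) : (Real.exp (-β * lam j) : ℂ) =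
      Real.exp (-β * lam k) * Real.exp (-β * (lam j - lam k)) := by
    rw [← Complex.ofReal_mul, ← Real.exp_add]
    ring_nf
  have exchange := Summable.tsum_comm (f := fun j k => (Real.exp (-β * lam j) : ℂ) *
      (⟪e j, y (e k)⟫_ℂ * ⟪e k, x (e j)⟫_ℂ))
    (summable_mul_inner_mul_inner he (Complex.summable_ofReal.mpr hs) x y)
  simp only [gibbsFn, inner_mul_apply_eq_tsum he he_dense, ← tsum_mul_left]
  rw [← exchange]
  refine congrArg (· / _) (tsum_congr fun k => tsum_congr fun j => ?_)
  rw [hy, weight_shift j k]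
  ring

theorem gibbsFn_mul_analytic_conj (he : Orthonormal ℂ e)
    (he_dense : Dense (Submodule.span ℂ (Set.range e) : Set Hs))
    (hs : Summable fun k => Real.exp (-β * lam k)) {U : ℝ → Hs ≃ₗᵢ[ℂ] Hs}
    (he_eig : ∀ (t : ℝ) (k), U t (e k) = Complex.exp (Complex.I * t * lam k) • e k)
    (x : Hs →L[ℂ] Hs) {y : Hs →L[ℂ] Hs} {F : ℂ → Hs →L[ℂ] Hs} (hF : Differentiable ℂ F)
    (hFU : ∀ (t : ℝ) ξ, F t ξ = U t (y (U (-t) ξ))) :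
    gibbsFn e lam β (x * F (Complex.I * β)) = gibbsFn e lam β (y * x) := by
  refine gibbsFn_mul_eq_of_inner_eq_exp_mul he he_dense hs x fun j k => ?_
  have coeff_eq : (fun z => ⟪e j, F z (e k)⟫_ℂ) =
      fun z => Complex.exp (Complex.I * z * (lam j - lam k)) * ⟪e j, y (e k)⟫_ℂ :=
    eq_of_differentiable_of_forall_ofReal_eq
      ((innerSL ℂ (e j)).differentiable.comp (hF.clm_apply (differentiable_const _)))
      (by fun_prop)
      fun t => by rw [hFU, inner_conj_apply_eigenvector he_eig]
  have exponent : Complex.I * (Complex.I * β) * (lam j - lam k) = (-β * (lam j - lam k) : ℝ) := by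
    push_cast
    linear_combination (β * (lam j - lam k) : ℂ) * Complex.I_mul_I
  rw [congrFun coeff_eq (Complex.I * β), exponent, Complex.ofReal_exp]

theorem gibbsFn_involution_conj (he : Orthonormal ℂ e)
    (he_dense : Dense (Submodule.span ℂ (Set.range e) : Set Hs))
    (hs : Summable fun k => Real.exp (-β * lam k)) {U : ℝ → Hs ≃ₗᵢ[ℂ] Hs}
    (hU0 : ∀ ξ, U 0 ξ = ξ) (hUadd : ∀ s t ξ, U (s + t) ξ = U s (U t ξ))
    (he_eig : ∀ (t : ℝ) (k), U t (e k) = Complex.exp (Complex.I * t * lam k) • e k)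
    {G : Hs →L[ℂ] Hs} (hG_un : G * G = 1) (hUG : ∀ (t : ℝ) (ξ), U t (G ξ) = G (U t ξ))
    (x : Hs →L[ℂ] Hs) : gibbsFn e lam β (G * x * G) = gibbsFn e lam β x :=
  calc gibbsFn e lam β (G * x * G) = gibbsFn e lam β (G * (G * x)) :=
        gibbsFn_mul_analytic_conj he he_dense hs he_eig (G * x) (F := fun _ => G)
          (differentiable_const G) fun t ξ => by rw [hUG, ← hUadd, add_neg_cancel, hU0]
    _ = gibbsFn e lam β x := by rw [← mul_assoc, hG_un, one_mul]

end Gibbs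

section CrossedProduct

variable {B : Type*} [CStarAlgebra B]

theorem IsState.comp_starAlgHom {ω : B → ℂ} (hω : IsState ω) (π : A →⋆ₐ[ℂ] B) :
    IsState fun a => ω (π a) := by
  obtain ⟨linear, nonneg, map_one_eq⟩ := hω
  refine ⟨(linear.mk' ω ∘ₗ π.toAlgHom.toLinearMap).isLinear, fun a => ?_, ?_⟩
  · simpa only [map_mul, map_star] using nonneg (π a)
  · simpa only [map_one] using map_one_eq

/-- The linear map `(a, b) ↦ π a + π b * G` by which a covariant pair `(π, G)` represents the
crossed product `A ⋊_γ ℤ₂`. Covariance is left to the lemmas, so that the map is defined for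
every `G`. -/
def cpRep (π : A →⋆ₐ[ℂ] B) (G : B) : A × A →ₗ[ℂ] B :=
  π.toAlgHom.toLinearMap.coprod (LinearMap.mulRight ℂ G ∘ₗ π.toAlgHom.toLinearMap)

theorem cpRep_apply (π : A →⋆ₐ[ℂ] B) (G : B) (p : A × A) :
    cpRep π G p = π p.1 + π p.2 * G := rfl

theorem cpRep_cpOne (π : A →⋆ₐ[ℂ] B) (G : B) : cpRep π G cpOne = 1 := by
  simp [cpRep_apply, cpOne]

theorem cpRep_cpMul {π : A →⋆ₐ[ℂ] B} {G : B} {γ : A ≃⋆ₐ[ℂ] A} (hG_un : G * G = 1)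
    (hγ : ∀ a, π (γ a) = G * π a * G) (p q : A × A) :
    cpRep π G (cpMul γ p q) = cpRep π G p * cpRep π G q := by
  simp only [cpRep_apply, cpMul, map_add, map_mul, hγ, add_mul, mul_add, mul_assoc, hG_un, mul_one]
  abel

theorem cpRep_cpStar {π : A →⋆ₐ[ℂ] B} {G : B} {γ : A ≃⋆ₐ[ℂ] A} (hG_sa : star G = G)
    (hG_un : G * G = 1) (hγ : ∀ a, π (γ a) = G * π a * G) (p : A × A) :
    cpRep π G (cpStar γ p) = star (cpRep π G p) := by
  simp only [cpRep_apply, cpStar, hγ, map_star, star_add, star_mul, hG_sa, mul_assoc, hG_un,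
    mul_one]

theorem IsState.cpIsState_comp_cpRep {ω : B → ℂ} (hω : IsState ω) {π : A →⋆ₐ[ℂ] B} {G : B}
    {γ : A ≃⋆ₐ[ℂ] A} (hG_sa : star G = G) (hG_un : G * G = 1)
    (hγ : ∀ a, π (γ a) = G * π a * G) : cpIsState γ fun p => ω (cpRep π G p) := by
  obtain ⟨linear, nonneg, map_one_eq⟩ := hω
  refine ⟨(linear.mk' ω ∘ₗ cpRep π G).isLinear, fun p => ?_, ?_⟩
  · simpa only [cpRep_cpMul hG_un hγ, cpRep_cpStar hG_sa hG_un hγ] using nonneg (cpRep π G p)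
  · simpa only [cpRep_cpOne] using map_one_eq

theorem IsState.cpIsState_comp_fst {ω : A → ℂ} (hω : IsState ω) (γ : A ≃⋆ₐ[ℂ] A) :
    cpIsState γ fun p => ω p.1 := by
  obtain ⟨linear, nonneg, map_one_eq⟩ := hω
  refine ⟨(linear.mk' ω ∘ₗ LinearMap.fst ℂ A A).isLinear, fun p => ?_, map_one_eq⟩
  have expand : ω (cpMul γ (cpStar γ p) p).1 = ω (star p.1 * p.1) + ω (star (γ p.2) * γ p.2) := by
    simp only [cpMul, cpStar, linear.map_add, map_star]
  exact (add_nonneg (nonneg p.1) (nonneg (γ p.2))).trans_eq expand.symm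

theorem cpIsAnalyticExt.fst {d : Dynamics A} {p : A × A} {f : ℂ → A × A}
    (hf : cpIsAnalyticExt d p f) : d.IsAnalyticExt p.1 fun z => (f z).1 :=
  ⟨hf.1.fst, fun t => by simp only [hf.2]⟩

theorem cpIsAnalyticExt.snd {d : Dynamics A} {p : A × A} {f : ℂ → A × A}
    (hf : cpIsAnalyticExt d p f) : d.IsAnalyticExt p.2 fun z => (f z).2 :=
  ⟨hf.1.snd, fun t => by simp only [hf.2]⟩

open scoped CStarAlgebra in
theorem differentiable_starAlgHom_comp {f : ℂ → A} (hf : Differentiable ℂ f) (π : A →⋆ₐ[ℂ] B) :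
    Differentiable ℂ fun z => π (f z) :=
  (ContinuousLinearMap.mk π.toAlgHom.toLinearMap (map_continuous π)).differentiable.comp hf

theorem GradedDyn.isAnalyticExt_grading (d : GradedDyn A) {a : A} {f : ℂ → A}
    (hf : d.IsAnalyticExt a f) : d.IsAnalyticExt (d.γ a) fun z => d.γ (f z) :=
  ⟨differentiable_starAlgHom_comp hf.1 (d.γ : A →⋆ₐ[ℂ] A), fun t => by simp only [hf.2, d.γ_comm]⟩

theorem GradedDyn.cpIsKMS_comp_fst (d : GradedDyn A) {β : ℝ} {ω : A → ℂ} (hω : d.IsKMS β ω)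
    (hωγ : ∀ a, ω (d.γ a) = ω a) : cpIsKMS d.toDynamics d.γ β fun p => ω p.1 := by
  obtain ⟨state, kms⟩ := hω
  refine ⟨state.cpIsState_comp_fst d.γ, fun p q fp fq hp hq => ?_⟩
  have even := kms p.1 q.1 _ _ hp.fst hq.fst
  have odd : ω (p.2 * d.γ (fq (Complex.I * β)).2) = ω (q.2 * d.γ p.2) :=
    calc ω (p.2 * d.γ (fq (Complex.I * β)).2) = ω (d.γ q.2 * p.2) :=
          kms p.2 (d.γ q.2) _ _ hp.snd (d.isAnalyticExt_grading hq.snd)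
      _ = ω (q.2 * d.γ p.2) := by rw [← hωγ, map_mul, d.γ_invol]
  simp only [cpMul, state.1.map_add, even, odd]

end CrossedProduct

section CovariantRepresentation

variable {Hs κ : Type*} [NormedAddCommGroup Hs] [InnerProductSpace ℂ Hs] [CompleteSpace Hs]
  {e : κ → Hs} {lam : κ → ℝ} {β : ℝ} {U : ℝ → Hs ≃ₗᵢ[ℂ] Hs} {G : Hs →L[ℂ] Hs}
  {π : A →⋆ₐ[ℂ] (Hs →L[ℂ] Hs)}

theorem isKMS_gibbsFn_comp [Nonempty κ] (he : Orthonormal ℂ e)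
    (he_dense : Dense (Submodule.span ℂ (Set.range e) : Set Hs))
    (hs : Summable fun k => Real.exp (-β * lam k))
    (he_eig : ∀ (t : ℝ) (k), U t (e k) = Complex.exp (Complex.I * t * lam k) • e k)
    {d : Dynamics A} (hd : ∀ (t : ℝ) (a : A) (ξ), π (d.α t a) ξ = U t (π a (U (-t) ξ))) :
    d.IsKMS β fun a => gibbsFn e lam β (π a) := by
  refine ⟨(isState_gibbsFn he hs).comp_starAlgHom π, fun a b _ fb _ hb => ?_⟩
  simp only [map_mul]
  exact gibbsFn_mul_analytic_conj he he_dense hs he_eig (π a) (F := fun z => π (fb z))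
    (differentiable_starAlgHom_comp hb.1 π) fun t ξ => by rw [hb.2, hd]

theorem cpIsKMS_gibbsFn_comp_cpRep [Nonempty κ] (he : Orthonormal ℂ e)
    (he_dense : Dense (Submodule.span ℂ (Set.range e) : Set Hs))
    (hs : Summable fun k => Real.exp (-β * lam k))
    (he_eig : ∀ (t : ℝ) (k), U t (e k) = Complex.exp (Complex.I * t * lam k) • e k)
    (hG_sa : star G = G) (hG_un : G * G = 1) (hUG : ∀ (t : ℝ) (ξ), U t (G ξ) = G (U t ξ))
    {γ : A ≃⋆ₐ[ℂ] A} (hγ : ∀ a, π (γ a) = G * π a * G)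
    {d : Dynamics A} (hd : ∀ (t : ℝ) (a : A) (ξ), π (d.α t a) ξ = U t (π a (U (-t) ξ))) :
    cpIsKMS d γ β fun p => gibbsFn e lam β (cpRep π G p) := by
  refine ⟨(isState_gibbsFn he hs).cpIsState_comp_cpRep hG_sa hG_un hγ, fun p q _ fq _ hq => ?_⟩
  have hfq : Differentiable ℂ fun z => cpRep π G (fq z) :=
    (differentiable_starAlgHom_comp hq.1.fst π).add
      ((differentiable_starAlgHom_comp hq.1.snd π).mul_const G)
  simp only [cpRep_cpMul hG_un hγ]
  refine gibbsFn_mul_analytic_conj he he_dense hs he_eig (cpRep π G p)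
    (F := fun z => cpRep π G (fq z)) hfq fun t ξ => ?_
  simp only [cpRep_apply, hq.2, add_apply, mul_apply_eq_comp, hd,
    hUG, map_add]

/-- The grading `γ` implemented by `G` in a faithful covariant representation, as a graded
dynamical system: faithfulness transports `G * G = 1` and the commutation of `G` with `U` to `γ`. -/
def GradedDyn.ofFaithful (d : Dynamics A) (γ : A ≃⋆ₐ[ℂ] A) (hπ : Function.Injective π)
    (hG_un : G * G = 1) (hUG : ∀ (t : ℝ) (ξ), U t (G ξ) = G (U t ξ))
    (hγ : ∀ a, π (γ a) = G * π a * G)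
    (hd : ∀ (t : ℝ) (a : A) (ξ), π (d.α t a) ξ = U t (π a (U (-t) ξ))) : GradedDyn A where
  toDynamics := d
  γ := γ
  γ_invol a := hπ <|
    calc π (γ (γ a)) = (G * G) * π a * (G * G) := by simp only [hγ, mul_assoc]
      _ = π a := by rw [hG_un, one_mul, mul_one]
  γ_comm t a := hπ <| by
    ext ξ
    simp only [hγ, hd, mul_apply_eq_comp, hUG]

end CovariantRepresentation

theorem gibbs_state_nonunique_extension_general
    {A : Type*} [CStarAlgebra A] (d : GradedDyn A)
    {Hs : Type*} [NormedAddCommGroup Hs] [InnerProductSpace ℂ Hs] [CompleteSpace Hs]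
    (π : A →⋆ₐ[ℂ] (Hs →L[ℂ] Hs))
    (G : Hs →L[ℂ] Hs) (hG_sa : star G = G) (hG_un : G * G = 1)
    (hγ : ∀ a : A, π (d.γ a) = G * π a * G)
    (U : ℝ → Hs ≃ₗᵢ[ℂ] Hs)
    (hU0 : ∀ ξ, U 0 ξ = ξ) (hUadd : ∀ s t ξ, U (s + t) ξ = U s (U t ξ))
    (hUG : ∀ (t : ℝ) (ξ), U t (G ξ) = G (U t ξ))
    (hd : ∀ (t : ℝ) (a : A) (ξ), π (d.α t a) ξ = U t (π a (U (-t) ξ)))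
    (β : ℝ) {κ : Type*} (e : κ → Hs) (lam : κ → ℝ) (he : Orthonormal ℂ e)
    (he_dense : Dense (Submodule.span ℂ (Set.range e) : Set Hs))
    (he_eig : ∀ (t : ℝ) (k), U t (e k) = Complex.exp (Complex.I * t * lam k) • e k)
    (hs : Summable fun k => Real.exp (-β * lam k))
    (hG_trace : (∑' k, (Real.exp (-β * lam k) : ℂ) * ⟪e k, G (e k)⟫_ℂ) ≠ 0) :
    d.IsKMS β (fun a => gibbsFn e lam β (π a)) ∧
    cpIsKMS d.toDynamics d.γ β (fun p : A × A => gibbsFn e lam β (π p.1)) ∧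
    cpIsKMS d.toDynamics d.γ β (fun p : A × A => gibbsFn e lam β (π p.1 + π p.2 * G)) ∧
    (∀ a : A, gibbsFn e lam β (π a + π (0 : A) * G) = gibbsFn e lam β (π a)) ∧
    (fun p : A × A => gibbsFn e lam β (π p.1)) ≠
      (fun p : A × A => gibbsFn e lam β (π p.1 + π p.2 * G)) := by
  have : Nonempty κ := not_isEmpty_iff.mp fun _ => hG_trace tsum_empty
  have kms : d.IsKMS β fun a => gibbsFn e lam β (π a) :=
    isKMS_gibbsFn_comp he he_dense hs he_eig hd
  have grading_invariant (a : A) : gibbsFn e lam β (π (d.γ a)) = gibbsFn e lam β (π a) := by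
    rw [hγ, gibbsFn_involution_conj he he_dense hs hU0 hUadd he_eig hG_un hUG]
  refine ⟨kms, d.cpIsKMS_comp_fst kms grading_invariant,
    cpIsKMS_gibbsFn_comp_cpRep he he_dense hs he_eig hG_sa hG_un hUG hγ hd,
    fun a => by rw [map_zero, zero_mul, add_zero], fun extensions_eq => ?_⟩
  have gibbsFn_G_eq_zero : gibbsFn e lam β G = 0 := by
    simpa [(isLinearMap_gibbsFn he hs).map_zero] using (congrFun extensions_eq (0, 1)).symm
  exact div_ne_zero hG_trace (tsum_ofReal_exp_pos hs).ne' gibbsFn_G_eq_zero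

/-- In the setting of the previous lemma (`A ⊆ B(H)` simple unital, `G` a
selfadjoint unitary normalizing `A` with `G ∉ A`, so `C*(A,G) ≅ A ⋊_{Ad_G} ℤ₂`), let
`U(t) = e^{itH₀}` be a strongly continuous unitary group commuting with `G` inducing a
dynamics `α` on `A`. If the Gibbs condition `Tr(e^{−βH₀}) < ∞` holds (expressed via an
orthonormal eigenbasis `e` with eigenvalues `lam` and `Σ e^{−β lam k} < ∞`) and
`Tr(e^{−βH₀} G) ≠ 0`, then the `(α,β)`-KMS state `ω_β = Tr(e^{−βH₀} ·)/Tr(e^{−βH₀})`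
does not have a unique extension to the crossed product: the canonical extension
`ω_β ∘ E` and the restriction of the Gibbs state `g_β` to the crossed product are two
distinct `(𝛂, β)`-KMS extensions of `ω_β`. -/
theorem gibbs_state_nonunique_extension
    {A : Type*} [CStarAlgebra A]
    {Hs : Type*} [NormedAddCommGroup Hs] [InnerProductSpace ℂ Hs] [CompleteSpace Hs]
    (ι : A →⋆ₐ[ℂ] (Hs →L[ℂ] Hs)) (hι : Function.Injective ι)
    (hsimple : ∀ I : Ideal A, IsClosed (I : Set A) → (∀ a ∈ I, star a ∈ I) →
      I = ⊥ ∨ I = ⊤)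
    (G : Hs →L[ℂ] Hs) (hG_sa : star G = G) (hG_un : G * G = 1)
    (γ : A ≃⋆ₐ[ℂ] A) (hγ : ∀ a : A, ι (γ a) = G * ι a * G)
    (hGnot : ∀ a : A, ι a ≠ G)
    (U : ℝ → Hs ≃ₗᵢ[ℂ] Hs)
    (hU0 : ∀ ξ, U 0 ξ = ξ) (hUadd : ∀ s t ξ, U (s + t) ξ = U s (U t ξ))
    (hUcont : ∀ ξ, Continuous fun t : ℝ => U t ξ)
    (hUG : ∀ (t : ℝ) (ξ), U t (G ξ) = G (U t ξ))
    (d : Dynamics A)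
    (hd : ∀ (t : ℝ) (a : A) (ξ), ι (d.α t a) ξ = U t (ι a (U (-t) ξ)))
    (β : ℝ)
    {κ : Type*} (e : κ → Hs) (lam : κ → ℝ)
    (he_on : Orthonormal ℂ e)
    (he_tot : Dense ((Submodule.span ℂ (Set.range e) : Submodule ℂ Hs) : Set Hs))
    (he_eig : ∀ (t : ℝ) (k), U t (e k) = Complex.exp (Complex.I * t * lam k) • e k)
    (hGibbs : Summable fun k => Real.exp (-β * lam k))
    (hGn0 : (∑' k, (Real.exp (-β * lam k) : ℂ) * ⟪e k, G (e k)⟫_ℂ) ≠ 0) :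
    d.IsKMS β (fun a => gibbsFn e lam β (ι a)) ∧
    cpIsKMS d γ β (fun p : A × A => gibbsFn e lam β (ι p.1)) ∧
    cpIsKMS d γ β (fun p : A × A => gibbsFn e lam β (ι p.1 + ι p.2 * G)) ∧
    (∀ a : A, gibbsFn e lam β (ι a + ι (0 : A) * G) = gibbsFn e lam β (ι a)) ∧
    (fun p : A × A => gibbsFn e lam β (ι p.1)) ≠
      (fun p : A × A => gibbsFn e lam β (ι p.1 + ι p.2 * G)) := by
  exact gibbs_state_nonunique_extension_general (GradedDyn.ofFaithful d γ hι hG_un hUG hγ hd)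
    ι G hG_sa hG_un hγ U hU0 hUadd hUG hd β e lam he_on he_tot he_eig hGibbs hGn0

end
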